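/- arXiv:1505.04000 — 3 statements merged into one kernel-verified Lean document; each statement's English description precedes it below -/
import Mathlib

section
/- Let A be a real n×n matrix, P a real symmetric n×n matrix satisfying P A + Aᵀ P = −Iₙ, and let T > 0, ε > 0. Then for every z ∈ ℝⁿ, (z + εT A z)ᵀ P (z + εT A z) − zᵀ P z ≤ εT (−1 + εT ‖Aᵀ P A‖) ‖z‖². In particular, if ε ≤ 1 / (2 T ‖Aᵀ P A‖), then (z + εT A z)ᵀ P (z + εT A z) − zᵀ P z ≤ −(1/2) εT ‖z‖² for all z ∈ ℝⁿ. -/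
open Matrix

/-- Let `P` be real symmetric with `PA + AᵀP = −Iₙ`, and `T, ε > 0`. Then
for every `z ∈ ℝⁿ`,
`(z + εTAz)ᵀP(z + εTAz) − zᵀPz ≤ εT(−1 + εT‖AᵀPA‖)‖z‖²`, and if moreover
`ε ≤ 1/(2T‖AᵀPA‖)` then the left-hand side is at most `−(1/2)εT‖z‖²`. Here `‖z‖` is the
Euclidean norm and `‖M‖` the spectral norm (Euclidean operator 2-norm). -/
theorem lyapunov_one_step_decrement {n : ℕ}
    (A P : Matrix (Fin n) (Fin n) ℝ) (hP : P.IsHermitian)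
    (hLyap : P * A + Aᵀ * P = -1)
    (T ε : ℝ) (hT : 0 < T) (hε : 0 < ε) :
    (∀ z : EuclideanSpace ℝ (Fin n),
      (inner ℝ (z + (ε * T) • (Matrix.toEuclideanCLM (𝕜 := ℝ) A z))
          (Matrix.toEuclideanCLM (𝕜 := ℝ) P
            (z + (ε * T) • (Matrix.toEuclideanCLM (𝕜 := ℝ) A z))) : ℝ)
        - (inner ℝ z (Matrix.toEuclideanCLM (𝕜 := ℝ) P z) : ℝ)
      ≤ ε * T * (-1 + ε * T * ‖Matrix.toEuclideanCLM (𝕜 := ℝ) (Aᵀ * P * A)‖) * ‖z‖ ^ 2)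
    ∧ (ε ≤ 1 / (2 * T * ‖Matrix.toEuclideanCLM (𝕜 := ℝ) (Aᵀ * P * A)‖) →
      ∀ z : EuclideanSpace ℝ (Fin n),
        (inner ℝ (z + (ε * T) • (Matrix.toEuclideanCLM (𝕜 := ℝ) A z))
            (Matrix.toEuclideanCLM (𝕜 := ℝ) P
              (z + (ε * T) • (Matrix.toEuclideanCLM (𝕜 := ℝ) A z))) : ℝ)
          - (inner ℝ z (Matrix.toEuclideanCLM (𝕜 := ℝ) P z) : ℝ)
        ≤ -(1/2) * ε * T * ‖z‖ ^ 2) := by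
  have hstar : Matrix.toEuclideanCLM (𝕜 := ℝ) Aᵀ
      = ContinuousLinearMap.adjoint (Matrix.toEuclideanCLM (𝕜 := ℝ) A) := by
    rw [← ContinuousLinearMap.star_eq_adjoint, ← map_star, Matrix.star_eq_conjTranspose,
      Matrix.conjTranspose_eq_transpose_of_trivial]
  have hL := congrArg (Matrix.toEuclideanCLM (𝕜 := ℝ) (n := Fin n)) hLyap
  rw [map_add, map_mul, map_mul, map_neg, map_one, hstar] at hL
  have hM : Matrix.toEuclideanCLM (𝕜 := ℝ) (Aᵀ * P * A)
      = ContinuousLinearMap.adjoint (Matrix.toEuclideanCLM (𝕜 := ℝ) A)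
        * Matrix.toEuclideanCLM (𝕜 := ℝ) P * Matrix.toEuclideanCLM (𝕜 := ℝ) A := by
    rw [map_mul, map_mul, hstar]
  generalize Matrix.toEuclideanCLM (𝕜 := ℝ) (Aᵀ * P * A) = m at *
  generalize Matrix.toEuclideanCLM (𝕜 := ℝ) A = a at *
  generalize Matrix.toEuclideanCLM (𝕜 := ℝ) P = p at *
  have key : ∀ z : EuclideanSpace ℝ (Fin n),
      (inner ℝ (z + (ε * T) • a z) (p (z + (ε * T) • a z)) : ℝ) - inner ℝ z (p z)
      ≤ ε * T * (-1 + ε * T * ‖m‖) * ‖z‖ ^ 2 := by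
    intro z
    have h1 : (inner ℝ z (p (a z)) : ℝ) + inner ℝ (a z) (p z) = -‖z‖ ^ 2 := by
      have h := congrArg (fun f => (inner ℝ z (f z) : ℝ)) hL
      simpa [inner_add_right, ContinuousLinearMap.adjoint_inner_right] using h
    have h2 : (inner ℝ (a z) (p (a z)) : ℝ) ≤ ‖m‖ * ‖z‖ ^ 2 := by
      have h3 : (inner ℝ (a z) (p (a z)) : ℝ) = inner ℝ z (m z) := by
        simp [hM, ContinuousLinearMap.adjoint_inner_right]
      rw [h3]
      have h4 := real_inner_le_norm z (m z)
      have h5 := mul_le_mul_of_nonneg_left (m.le_opNorm z) (norm_nonneg z)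
      nlinarith
    have h6 : (inner ℝ (z + (ε * T) • a z) (p (z + (ε * T) • a z)) : ℝ)
        = inner ℝ z (p z) + (ε * T) * (inner ℝ z (p (a z)) + inner ℝ (a z) (p z))
          + (ε * T) ^ 2 * inner ℝ (a z) (p (a z)) := by
      simp only [map_add, map_smul, inner_add_left, inner_add_right, real_inner_smul_left,
        real_inner_smul_right]
      ring
    rw [h6, h1]
    have h7 := mul_le_mul_of_nonneg_left h2 (sq_nonneg (ε * T))
    linarith
  refine ⟨key, fun hle z => (key z).trans ?_⟩
  have hb : ε * T * ‖m‖ ≤ 1 / 2 := by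
    rcases (norm_nonneg m).eq_or_lt with h0 | h0
    · rw [← h0]; norm_num
    · rw [le_div_iff₀ (by positivity)] at hle
      linarith
  have h8 : 0 ≤ ε * T * ‖z‖ ^ 2 := by positivity
  have h9 := mul_le_mul_of_nonneg_left hb h8
  linarith
end

section
/- Let J and L₀ be real symmetric positive definite 3×3 matrices, k₁ > 0, k₂ > 0, and let L : ℝ → M₃(ℝ) be a matrix-valued function continuous at 0 with L(0) = L₀. For T > 0 define the 6×6 block matrix A_s(T) = [[0, (1/2)I₃], [−k₁ J⁻¹ L(T), −k₂ J⁻¹ L(T)]]. Then there exists T* > 0 such that for every 0 < T < T* there exists ε₀ > 0 such that for all 0 < ε ≤ ε₀, every complex eigenvalue of I₆ + εT A_s(T) has modulus strictly less than 1; consequently the discrete-time system z(k+1) = (I₆ + εT A_s(T)) z(k) is exponentially stable. -/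
open Matrix Filter Topology

/-- Positivity of the quadratic form of a (not necessarily symmetric) real matrix. -/
def QPos {n : Type} [Fintype n] (Q : Matrix n n ℝ) : Prop :=
  ∀ x : n → ℝ, x ≠ 0 → 0 < x ⬝ᵥ (Q *ᵥ x)

theorem QPos.nonneg {n : Type} [Fintype n] {Q : Matrix n n ℝ} (h : QPos Q) (x : n → ℝ) :
    0 ≤ x ⬝ᵥ (Q *ᵥ x) := by
  by_cases hx : x = 0
  · simp [hx]
  · exact (h x hx).le

theorem qpos_eventually {n : Type} [Fintype n] (Q : ℝ → Matrix n n ℝ)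
    (hc : ContinuousAt Q 0) (h0 : QPos (Q 0)) : ∀ᶠ t in 𝓝 (0 : ℝ), QPos (Q t) := by
  have hK : IsCompact (Metric.sphere (0 : n → ℝ) 1) := isCompact_sphere _ _
  have key : ∀ᶠ t in 𝓝 (0 : ℝ), ∀ y ∈ Metric.sphere (0 : n → ℝ) 1, 0 < y ⬝ᵥ (Q t *ᵥ y) := by
    apply hK.eventually_forall_of_forall_eventually
    intro y hy
    have hy0 : y ≠ 0 := by
      rintro rfl
      simp at hy
    have hcont : ContinuousAt (fun z : ℝ × (n → ℝ) => z.2 ⬝ᵥ (Q z.1 *ᵥ z.2)) (0, y) := by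
      have hQ : ContinuousAt (fun z : ℝ × (n → ℝ) => Q z.1) (0, y) :=
        ContinuousAt.comp (f := Prod.fst) (g := Q) (x := ((0 : ℝ), y)) hc continuousAt_fst
      have h2 : Continuous (fun w : (Matrix n n ℝ) × (n → ℝ) => w.2 ⬝ᵥ (w.1 *ᵥ w.2)) := by
        fun_prop
      exact ContinuousAt.comp (f := fun z : ℝ × (n → ℝ) => (Q z.1, z.2)) h2.continuousAt
        (hQ.prodMk continuousAt_snd)
    exact hcont.eventually (lt_mem_nhds (h0 y hy0))
  filter_upwards [key] with t ht x hx
  have hn : 0 < ‖x‖ := norm_pos_iff.mpr hx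
  have := ht (‖x‖⁻¹ • x) (by simp [norm_smul, hn.ne'])
  rw [mulVec_smul, dotProduct_smul, smul_dotProduct, smul_eq_mul, smul_eq_mul] at this
  have hi : 0 < ‖x‖⁻¹ := inv_pos.mpr hn
  exact (mul_pos_iff_of_pos_left hi).1 ((mul_pos_iff_of_pos_left hi).1 this)

theorem qpos_small {n : Type} [Fintype n] (Q : ℝ → Matrix n n ℝ)
    (hc : ContinuousAt Q 0) (h0 : QPos (Q 0)) : ∃ d : ℝ, 0 < d ∧ ∀ t, 0 < t → t < d → QPos (Q t) := by
  obtain ⟨d, hd, h⟩ := Metric.eventually_nhds_iff.1 (qpos_eventually Q hc h0)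
  exact ⟨d, hd, fun t h1 h2 => h (by simpa [abs_of_pos h1] using h2)⟩

theorem qpos_sub {n : Type} [Fintype n] (A B : Matrix n n ℝ) (hA : QPos A) :
    ∃ d : ℝ, 0 < d ∧ ∀ t, 0 < t → t < d → QPos (A - t • B) :=
  qpos_small (fun t => A - t • B) (by fun_prop) (by simpa using hA)

theorem qpos_of_posDef {n : Type} [Fintype n] {A : Matrix n n ℝ} (hA : A.PosDef) : QPos A := by
  intro x hx
  simpa using hA.dotProduct_mulVec_pos hx

theorem quad_congr {n : Type} [Fintype n] (P M : Matrix n n ℝ) (x : n → ℝ) :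
    x ⬝ᵥ ((Mᵀ * P * M) *ᵥ x) = (M *ᵥ x) ⬝ᵥ (P *ᵥ (M *ᵥ x)) := by
  rw [← mulVec_mulVec, ← mulVec_mulVec, dotProduct_mulVec, vecMul_transpose]

theorem stein_spectrum {n : Type} [Fintype n] [DecidableEq n] (P M : Matrix n n ℝ)
    (hP : QPos P) (hR : QPos (P - Mᵀ * P * M)) :
    ∀ μ ∈ spectrum ℂ (M.map (algebraMap ℝ ℂ)), ‖μ‖ < 1 := by
  intro μ hμ
  rw [← Matrix.spectrum_toLin', ← Module.End.hasEigenvalue_iff_mem_spectrum] at hμ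
  obtain ⟨v, hv⟩ := hμ.exists_hasEigenvector
  have hv0 := hv.2
  have hve : (M.map (algebraMap ℝ ℂ)) *ᵥ v = μ • v := by
    simpa using hv.apply_eq_smul
  set x : n → ℝ := fun i => (v i).re with hx
  set y : n → ℝ := fun i => (v i).im with hy
  have hMx : M *ᵥ x = μ.re • x - μ.im • y := by
    ext i
    have := congrArg Complex.re (congrFun hve i)
    simpa [mulVec, dotProduct, hx, hy] using this
  have hMy : M *ᵥ y = μ.im • x + μ.re • y := by
    ext i
    have := congrArg Complex.im (congrFun hve i)
    simp [mulVec, dotProduct] at this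
    simp [mulVec, dotProduct, hx, hy, this]
    ring
  have hxy : x ≠ 0 ∨ y ≠ 0 := by
    by_contra! h
    apply hv0
    ext i
    exact Complex.ext (congrFun h.1 i) (congrFun h.2 i)
  have e : ∀ w, w ⬝ᵥ ((P - Mᵀ * P * M) *ᵥ w) = w ⬝ᵥ (P *ᵥ w) - (M *ᵥ w) ⬝ᵥ (P *ᵥ (M *ᵥ w)) := by
    intro w
    rw [sub_mulVec, dotProduct_sub, quad_congr]
  have hsum : (M *ᵥ x) ⬝ᵥ (P *ᵥ (M *ᵥ x)) + (M *ᵥ y) ⬝ᵥ (P *ᵥ (M *ᵥ y))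
      = (μ.re ^ 2 + μ.im ^ 2) * (x ⬝ᵥ (P *ᵥ x) + y ⬝ᵥ (P *ᵥ y)) := by
    rw [hMx, hMy]
    simp only [mulVec_add, mulVec_sub, mulVec_smul, dotProduct_add, dotProduct_sub, add_dotProduct,
      sub_dotProduct, smul_dotProduct, dotProduct_smul, smul_eq_mul]
    ring
  have hx1 := hP.nonneg x
  have hy1 := hP.nonneg y
  have hx2 := hR.nonneg x
  have hy2 := hR.nonneg y
  have hlt : (μ.re ^ 2 + μ.im ^ 2) * (x ⬝ᵥ (P *ᵥ x) + y ⬝ᵥ (P *ᵥ y))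
      < x ⬝ᵥ (P *ᵥ x) + y ⬝ᵥ (P *ᵥ y) := by
    rw [← hsum]
    rcases hxy with h | h
    · have := hR _ h
      rw [e] at *
      linarith
    · have := hR _ h
      rw [e] at *
      linarith
  have hsq : ‖μ‖ ^ 2 < 1 := by
    rw [Complex.sq_norm, Complex.normSq_apply]
    nlinarith
  nlinarith [norm_nonneg μ]

theorem stein_exp {n : Type} [Fintype n] [DecidableEq n] (P M : Matrix n n ℝ)
    (hP : QPos P) (hR : QPos (P - Mᵀ * P * M)) :
    ∃ c ρ : ℝ, 1 ≤ c ∧ 0 < ρ ∧ ρ < 1 ∧ ∀ (z : EuclideanSpace ℝ n) (k : ℕ),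
      ‖Matrix.toEuclideanCLM (𝕜 := ℝ) (M ^ k) z‖ ≤ c * ρ ^ k * ‖z‖ := by
  have h1 : QPos (1 : Matrix n n ℝ) := qpos_of_posDef PosDef.one
  obtain ⟨d1, hd1, H1⟩ := qpos_sub _ P hR
  obtain ⟨d2, hd2, H2⟩ := qpos_sub _ 1 hP
  obtain ⟨d3, hd3, H3⟩ := qpos_sub _ P h1
  obtain ⟨m, hm0, hm⟩ := exists_between (lt_min hd1 one_pos)
  obtain ⟨t, ht0, ht⟩ := exists_between (lt_min (lt_min hd2 hd3) one_pos)
  simp only [lt_min_iff] at hm ht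
  have A1 := (H1 m hm0 hm.1).nonneg
  have A2 := (H2 t ht0 ht.1.1).nonneg
  have A3 := (H3 t ht0 ht.1.2).nonneg
  simp only [sub_mulVec, smul_mulVec, dotProduct_sub, dotProduct_smul, quad_congr, one_mulVec,
    smul_eq_mul] at A1 A2 A3
  have hr : 0 < 1 - m := by linarith [hm.2]
  have V : ∀ (k : ℕ) (x : n → ℝ), (M ^ k *ᵥ x) ⬝ᵥ (P *ᵥ (M ^ k *ᵥ x))
      ≤ (1 - m) ^ k * (x ⬝ᵥ (P *ᵥ x)) := by
    intro k x
    induction k with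
    | zero => simp
    | succ k ih =>
      have := A1 (M ^ k *ᵥ x)
      rw [pow_succ', ← mulVec_mulVec, pow_succ']
      nlinarith
  refine ⟨1 / t, Real.sqrt (1 - m), ?_, Real.sqrt_pos.2 hr, ?_, ?_⟩
  · rw [le_div_iff₀ ht0]; linarith [ht.2]
  · rw [Real.sqrt_lt' one_pos]; linarith
  · intro z k
    have nrm : ∀ w : EuclideanSpace ℝ n, ‖w‖ ^ 2 = w.ofLp ⬝ᵥ w.ofLp := by
      intro w
      rw [EuclideanSpace.real_norm_sq_eq]
      simp [dotProduct, sq]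
    refine le_of_abs_le (abs_le_of_sq_le_sq ?_ (by positivity))
    rw [nrm, mul_pow, mul_pow, ← pow_mul, mul_comm k 2, pow_mul, Real.sq_sqrt hr.le, nrm,
      Matrix.ofLp_toEuclideanCLM]
    have a := V k z.ofLp
    have b := A2 (M ^ k *ᵥ z.ofLp)
    have c := A3 z.ofLp
    have hp : 0 < (1 - m) ^ k := by positivity
    have : t ^ 2 * ((M ^ k *ᵥ z.ofLp) ⬝ᵥ (M ^ k *ᵥ z.ofLp)) ≤ (1 - m) ^ k * (z.ofLp ⬝ᵥ z.ofLp) := by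
      have c' := mul_le_mul_of_nonneg_left (sub_nonneg.1 c) hp.le
      have b' := mul_le_mul_of_nonneg_left (a.trans' (sub_nonneg.1 b)) ht0.le
      linarith
    rw [div_pow, one_pow, one_div, mul_assoc, ← div_eq_inv_mul, le_div_iff₀ (by positivity)]
    linarith

theorem qpos_blockdiag {n : Type} [Fintype n] (A D : Matrix n n ℝ)
    (hA : QPos A) (hD : QPos D) : QPos (fromBlocks A 0 0 D) := by
  intro z hz
  obtain ⟨x, y, rfl⟩ : ∃ x y, z = Sum.elim x y := ⟨z ∘ Sum.inl, z ∘ Sum.inr, by simp⟩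
  rw [fromBlocks_mulVec, sumElim_dotProduct_sumElim]
  simp only [Sum.elim_comp_inl, Sum.elim_comp_inr, zero_mulVec, add_zero, zero_add]
  by_cases hx : x = 0
  · have hy : y ≠ 0 := by
      rintro rfl
      apply hz
      subst hx
      simp
    linarith [hA.nonneg x, hD y hy]
  · linarith [hA x hx, hD.nonneg y]

theorem qpos_lyap {n : Type} [Fintype n] (J L : Matrix n n ℝ) (hJ : J.PosDef) (hL : QPos L)
    (k₁ k₂ δ : ℝ) (hk₁ : 0 < k₁) (hδ : 0 < δ) (h : QPos (k₂ • L - δ • J)) :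
    QPos (fromBlocks ((k₁ + 2 * δ * k₂) • L) (δ • J) (δ • J) ((1 / 2 : ℝ) • J)) := by
  intro z hz
  obtain ⟨x, y, rfl⟩ : ∃ x y, z = Sum.elim x y := ⟨z ∘ Sum.inl, z ∘ Sum.inr, by simp⟩
  rw [fromBlocks_mulVec, sumElim_dotProduct_sumElim]
  have hQJ := qpos_of_posDef hJ
  have h1 := h.nonneg x
  have h2 := hQJ.nonneg (y + (2 * δ) • x)
  simp only [Sum.elim_comp_inl, Sum.elim_comp_inr, smul_mulVec, sub_mulVec, mulVec_add,
    mulVec_smul, dotProduct_add, dotProduct_sub, add_dotProduct, smul_dotProduct, dotProduct_smul,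
    smul_eq_mul] at *
  by_cases hx : x = 0
  · have hy : y ≠ 0 := by
      rintro rfl
      apply hz
      subst hx
      simp
    have := hQJ y hy
    subst hx
    simp
    linarith
  · have h3 := mul_pos hk₁ (hL x hx)
    have h4 := mul_nonneg hδ.le h1
    linarith

/-- Theorem 1 of the paper, averaged state-feedback system. With `J, L₀`
symmetric positive definite, `k₁, k₂ > 0`, and `L : ℝ → M₃(ℝ)` continuous at `0` with
`L 0 = L₀`, set `A_s(T) = [[0, (1/2)I₃], [−k₁J⁻¹L(T), −k₂J⁻¹L(T)]]`. Then there is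
`T* > 0` such that for every `0 < T < T*` there is `ε₀ > 0` such that for all
`0 < ε ≤ ε₀` every complex eigenvalue of `I₆ + εT A_s(T)` has modulus `< 1`, and the
discrete-time system `z(k+1) = (I₆ + εT A_s(T)) z(k)` is exponentially stable. -/
theorem averaged_state_feedback_stability
    (J L₀ : Matrix (Fin 3) (Fin 3) ℝ) (hJ : J.PosDef) (hL₀ : L₀.PosDef)
    (k₁ k₂ : ℝ) (hk₁ : 0 < k₁) (hk₂ : 0 < k₂)
    (L : ℝ → Matrix (Fin 3) (Fin 3) ℝ) (hLcont : ContinuousAt L 0) (hL0 : L 0 = L₀)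
    (As : ℝ → Matrix (Fin 3 ⊕ Fin 3) (Fin 3 ⊕ Fin 3) ℝ)
    (hAs : ∀ T, As T = Matrix.fromBlocks
      (0 : Matrix (Fin 3) (Fin 3) ℝ) ((1/2 : ℝ) • (1 : Matrix (Fin 3) (Fin 3) ℝ))
      (-(k₁ • (J⁻¹ * L T))) (-(k₂ • (J⁻¹ * L T)))) :
    ∃ Tstar : ℝ, 0 < Tstar ∧ ∀ T : ℝ, 0 < T → T < Tstar →
      ∃ ε₀ : ℝ, 0 < ε₀ ∧ ∀ ε : ℝ, 0 < ε → ε ≤ ε₀ →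
        (∀ μ ∈ spectrum ℂ
            (((1 : Matrix (Fin 3 ⊕ Fin 3) (Fin 3 ⊕ Fin 3) ℝ) + (ε * T) • As T).map
              (algebraMap ℝ ℂ)),
          ‖μ‖ < 1)
        ∧ ∃ c ρ : ℝ, 1 ≤ c ∧ 0 < ρ ∧ ρ < 1 ∧
            ∀ (z : EuclideanSpace ℝ (Fin 3 ⊕ Fin 3)) (k : ℕ),
              ‖Matrix.toEuclideanCLM (𝕜 := ℝ)
                  (((1 : Matrix (Fin 3 ⊕ Fin 3) (Fin 3 ⊕ Fin 3) ℝ) + (ε * T) • As T) ^ k) z‖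
                ≤ c * ρ ^ k * ‖z‖ := by
  have hQJ := qpos_of_posDef hJ
  have hQL := qpos_of_posDef hL₀
  have hJu : IsUnit J.det := hJ.isUnit.map detMonoidHom
  have hJt : Jᵀ = J := by simpa using hJ.isHermitian.eq
  have hLt : L₀ᵀ = L₀ := by simpa using hL₀.isHermitian.eq
  have hkL : QPos (k₂ • L₀) := by
    intro x hx
    simpa [smul_mulVec] using mul_pos hk₂ (hQL x hx)
  obtain ⟨d, hd, Hd⟩ := qpos_sub _ J hkL
  obtain ⟨δ, hδ0, hδ⟩ := exists_between hd
  have hδL := Hd δ hδ0 hδ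
  set P := fromBlocks ((k₁ + 2 * δ * k₂) • L₀) (δ • J) (δ • J) ((1 / 2 : ℝ) • J) with hPdef
  have hP : QPos P := qpos_lyap J L₀ hJ hQL k₁ k₂ δ hk₁ hδ0 hδL
  have hAc : ContinuousAt As 0 := by
    have : As = fun T => Matrix.fromBlocks
      (0 : Matrix (Fin 3) (Fin 3) ℝ) ((1/2 : ℝ) • (1 : Matrix (Fin 3) (Fin 3) ℝ))
      (-(k₁ • (J⁻¹ * L T))) (-(k₂ • (J⁻¹ * L T))) := funext hAs
    rw [this]
    have hc : Continuous (fun B : Matrix (Fin 3) (Fin 3) ℝ => Matrix.fromBlocks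
      (0 : Matrix (Fin 3) (Fin 3) ℝ) ((1/2 : ℝ) • (1 : Matrix (Fin 3) (Fin 3) ℝ))
      (-(k₁ • (J⁻¹ * B))) (-(k₂ • (J⁻¹ * B)))) := by
      apply Continuous.matrix_fromBlocks <;> fun_prop
    exact ContinuousAt.comp (f := L) hc.continuousAt hLcont
  have hQc : ContinuousAt (fun T => -((As T)ᵀ * P + P * As T)) 0 := by
    have hc : Continuous (fun B : Matrix (Fin 3 ⊕ Fin 3) (Fin 3 ⊕ Fin 3) ℝ =>
      -(Bᵀ * P + P * B)) := by fun_prop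
    exact ContinuousAt.comp (f := As) hc.continuousAt hAc
  have hQ0 : QPos (-((As 0)ᵀ * P + P * As 0)) := by
    have e : -((As 0)ᵀ * P + P * As 0) = fromBlocks ((2 * k₁ * δ) • L₀) 0 0 (k₂ • L₀ - δ • J) := by
      rw [hAs, hL0, hPdef, fromBlocks_transpose, fromBlocks_multiply, fromBlocks_multiply,
        fromBlocks_add, fromBlocks_neg]
      have e1 : J * (J⁻¹ * L₀) = L₀ := mul_nonsing_inv_cancel_left _ _ hJu
      have e2 : L₀ * J⁻¹ * J = L₀ := nonsing_inv_mul_cancel_right _ _ hJu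
      simp only [transpose_neg, transpose_smul, transpose_mul, transpose_nonsing_inv, hJt, hLt,
        transpose_zero, transpose_one, zero_mul, mul_zero, Matrix.smul_mul, Matrix.mul_smul,
        Matrix.neg_mul, Matrix.mul_neg, e1, e2, Matrix.one_mul, Matrix.mul_one, Matrix.zero_mul,
        Matrix.mul_zero]
      congr 1 <;> module
    rw [e]
    apply qpos_blockdiag _ _ _ hδL
    intro x hx
    simpa [smul_mulVec] using mul_pos (mul_pos (mul_pos two_pos hk₁) hδ0) (hQL x hx)
  obtain ⟨Ts, hTs, HT⟩ := qpos_small _ hQc hQ0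
  refine ⟨Ts, hTs, fun T hT0 hT => ?_⟩
  obtain ⟨h0, hh0, Hh⟩ := qpos_sub _ ((As T)ᵀ * P * As T) (HT T hT0 hT)
  refine ⟨h0 / (2 * T), by positivity, fun ε hε0 hε => ?_⟩
  have hh : 0 < ε * T := by positivity
  have hlt : ε * T < h0 := by
    rw [le_div_iff₀ (by positivity)] at hε
    nlinarith
  have hR0 := Hh (ε * T) hh hlt
  have hR : QPos (P - (1 + (ε * T) • As T)ᵀ * P * (1 + (ε * T) • As T)) := by
    have e : P - (1 + (ε * T) • As T)ᵀ * P * (1 + (ε * T) • As T)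
        = (ε * T) • (-((As T)ᵀ * P + P * As T) - (ε * T) • ((As T)ᵀ * P * As T)) := by
      simp only [transpose_add, transpose_one, transpose_smul, Matrix.add_mul, Matrix.mul_add,
        Matrix.one_mul, Matrix.mul_one, Matrix.smul_mul, Matrix.mul_smul]
      module
    rw [e]
    intro x hx
    rw [smul_mulVec, dotProduct_smul, smul_eq_mul]
    exact mul_pos hh (hR0 x hx)
  exact ⟨stein_spectrum P _ hP hR, stein_exp P _ hP hR⟩
end

section
/- Let J and L₀ be real symmetric positive definite 3×3 matrices, k₁ > 0, k₂ > 0, α > 0, λ > 0, and let L : ℝ → M₃(ℝ) be a matrix-valued function continuous at 0 with L(0) = L₀. For T > 0 define the 10×10 block matrix A_o(T) = [[0, (1/2)I₃, 0, 0], [−k₁ J⁻¹ L(T), 0, −(1/2) k₂ α λ J⁻¹ L(T), 0], [0, (1/2)I₃, −α λ I₃, 0], [0, 0, 0, −α λ]]. Then there exists T* > 0 such that for every 0 < T < T* there exists ε₀ > 0 such that for all 0 < ε ≤ ε₀, every complex eigenvalue of I₁₀ + εT A_o(T) has modulus strictly less than 1; consequently the discrete-time system z(k+1) = (I₁₀ +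 εT A_o(T)) z(k) is exponentially stable. -/
open Matrix

theorem aux_coercive {E : Type*} [NormedAddCommGroup E] [InnerProductSpace ℝ E]
    [FiniteDimensional ℝ E] (B : E →L[ℝ] E) (h : ∀ x : E, x ≠ 0 → 0 < inner ℝ x (B x)) :
    ∃ c : ℝ, 0 < c ∧ ∀ x : E, c * ‖x‖ ^ 2 ≤ inner ℝ x (B x) := by
  have hcomp : IsCompact (Metric.sphere (0 : E) 1) := isCompact_sphere 0 1
  rcases (Metric.sphere (0 : E) 1).eq_empty_or_nonempty with he | hne
  · refine ⟨1, one_pos, fun x => ?_⟩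
    by_cases hx : x = 0
    · simp [hx]
    · exfalso
      have : (‖x‖⁻¹ • x) ∈ Metric.sphere (0 : E) 1 := by
        simp [norm_smul, hx]
      rw [he] at this
      exact this
  · obtain ⟨x₀, hx₀, hmin⟩ := hcomp.exists_isMinOn hne
      (f := fun x => inner ℝ x (B x)) (by fun_prop)
    have hx₀' : x₀ ≠ 0 := by
      rintro rfl
      simp at hx₀
    refine ⟨_, h x₀ hx₀', fun x => ?_⟩
    by_cases hx : x = 0
    · simp [hx]
    have hmem : (‖x‖⁻¹ • x) ∈ Metric.sphere (0 : E) 1 := by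
      simp [norm_smul, hx]
    have h1 := hmin hmem
    simp only [Set.mem_ofPred_eq, map_smul, inner_smul_left, inner_smul_right] at h1
    have hn : 0 < ‖x‖ := norm_pos_iff.mpr hx
    have h2 := mul_le_mul_of_nonneg_right h1 (sq_nonneg ‖x‖)
    refine h2.trans (le_of_eq ?_)
    simp
    field_simp

theorem aux_decay {E : Type*} [NormedAddCommGroup E] [InnerProductSpace ℝ E]
    (P A : E →L[ℝ] E) (hP : ∀ x y, inner ℝ x (P y) = inner ℝ y (P x))
    (c d : ℝ) (hc : 0 < c) (hd : 0 < d)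
    (hPc : ∀ x : E, c * ‖x‖ ^ 2 ≤ inner ℝ x (P x))
    (hA : ∀ x : E, inner ℝ x (P (A x)) ≤ -d * ‖x‖ ^ 2) :
    ∃ h₀ : ℝ, 0 < h₀ ∧ ∀ h : ℝ, 0 < h → h ≤ h₀ →
      ∃ C ρ : ℝ, 1 ≤ C ∧ 0 < ρ ∧ ρ < 1 ∧ ∀ (z : E) (k : ℕ),
        ‖((1 + h • A) ^ k) z‖ ≤ C * ρ ^ k * ‖z‖ := by
  set K := ‖P‖ * ‖A‖ ^ 2 with hK
  have hK0 : 0 ≤ K := by positivity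
  set M := ‖P‖ + c + d with hM
  have hM0 : 0 < M := by positivity
  have hMd : d < M := by have := norm_nonneg P; linarith
  refine ⟨min 1 (d / (K + 1)), by positivity, fun h hh hle => ?_⟩
  have hh1 : h ≤ 1 := hle.trans (min_le_left _ _)
  have hhK : h * K ≤ d := by
    have := hle.trans (min_le_right _ _)
    rw [le_div_iff₀ (by positivity)] at this
    nlinarith
  have hPM : ∀ x : E, inner ℝ x (P x) ≤ M * ‖x‖ ^ 2 := by
    intro x
    have h1 := real_inner_le_norm x (P x)
    have h2 := P.le_opNorm x
    have h3 : ‖x‖ * ‖P x‖ ≤ ‖x‖ * (‖P‖ * ‖x‖) := by gcongr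
    nlinarith [sq_nonneg ‖x‖]
  set r := 1 - h * d / M with hr
  have hr1 : r < 1 := by
    have : 0 < h * d / M := by positivity
    linarith
  have hr0 : 0 < r := by
    have : h * d / M < 1 := by
      rw [div_lt_one hM0]; nlinarith
    linarith
  have hstep : ∀ x : E, inner ℝ ((1 + h • A) x) (P ((1 + h • A) x)) ≤ r * inner ℝ x (P x) := by
    intro x
    have e : inner ℝ ((1 + h • A) x) (P ((1 + h • A) x)) = inner ℝ x (P x)
        + 2 * h * inner ℝ x (P (A x)) + h ^ 2 * inner ℝ (A x) (P (A x)) := by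
      simp [inner_add_left, inner_add_right, inner_smul_left, inner_smul_right]
      rw [hP (A x) x]; ring
    have h1 := real_inner_le_norm (A x) (P (A x))
    have h2 : ‖A x‖ * ‖P (A x)‖ ≤ (‖A‖ * ‖x‖) * (‖P‖ * (‖A‖ * ‖x‖)) := by
      have := A.le_opNorm x
      have h3 := P.le_opNorm (A x)
      gcongr
      exact h3.trans (by gcongr)
    have h3 : inner ℝ (A x) (P (A x)) ≤ K * ‖x‖ ^ 2 := by
      rw [hK]; nlinarith
    have h4 := hA x
    have h5 := hPM x
    have h6 : h ^ 2 * inner ℝ (A x) (P (A x)) ≤ h * d * ‖x‖ ^ 2 := by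
      calc h ^ 2 * inner ℝ (A x) (P (A x)) ≤ h ^ 2 * (K * ‖x‖ ^ 2) := by gcongr
        _ = h * (h * K) * ‖x‖ ^ 2 := by ring
        _ ≤ _ := by gcongr
    have h7 : h * d / M * inner ℝ x (P x) ≤ h * d * ‖x‖ ^ 2 := by
      calc _ ≤ h * d / M * (M * ‖x‖ ^ 2) := by gcongr
        _ = _ := by field_simp
    have h8 : 2 * h * inner ℝ x (P (A x)) ≤ 2 * h * (-d * ‖x‖ ^ 2) := by gcongr
    rw [e, hr]
    linarith
  have hiter : ∀ (k : ℕ) (z : E),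
      inner ℝ (((1 + h • A) ^ k) z) (P (((1 + h • A) ^ k) z)) ≤ r ^ k * inner ℝ z (P z) := by
    intro k
    induction k with
    | zero => intro z; simp
    | succ k ih =>
      intro z
      rw [pow_succ']
      refine (hstep _).trans ?_
      rw [pow_succ', mul_assoc]
      exact mul_le_mul_of_nonneg_left (ih z) hr0.le
  have hMc : 1 ≤ M / c := by
    rw [le_div_iff₀ hc]; have := norm_nonneg P; linarith
  refine ⟨√(M / c), √r, ?_, Real.sqrt_pos.mpr hr0, ?_, fun z k => ?_⟩
  · rw [Real.one_le_sqrt]; exact hMc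
  · rw [Real.sqrt_lt' one_pos]; simpa using hr1
  · apply le_of_sq_le_sq _ (by positivity)
    rw [mul_pow, mul_pow, ← pow_mul, mul_comm k 2, pow_mul, Real.sq_sqrt hr0.le,
      Real.sq_sqrt (by positivity)]
    have h1 := hPc (((1 + h • A) ^ k) z)
    have h2 := hiter k z
    have h3 : r ^ k * inner ℝ z (P z) ≤ r ^ k * (M * ‖z‖ ^ 2) := by
      have := hPM z; gcongr
    rw [div_mul_eq_mul_div, div_mul_eq_mul_div, le_div_iff₀ hc]
    linarith

theorem aux_spec {n : Type*} [Fintype n] [DecidableEq n] (B : Matrix n n ℝ) (c ρ : ℝ)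
    (hρ0 : 0 < ρ) (hρ : ρ < 1)
    (h : ∀ (z : EuclideanSpace ℝ n) (k : ℕ),
      ‖Matrix.toEuclideanCLM (𝕜 := ℝ) (B ^ k) z‖ ≤ c * ρ ^ k * ‖z‖) :
    ∀ μ ∈ spectrum ℂ (B.map (algebraMap ℝ ℂ)), ‖μ‖ < 1 := by
  intro μ hμ
  by_contra! hμ1
  rw [← Matrix.spectrum_toLin', ← Module.End.hasEigenvalue_iff_mem_spectrum] at hμ
  obtain ⟨v, hv⟩ := hμ.exists_hasEigenvector
  have hBv : B.map (algebraMap ℝ ℂ) *ᵥ v = μ • v := by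
    simpa using hv.apply_eq_smul
  have hk : ∀ k : ℕ, (B ^ k).map (algebraMap ℝ ℂ) *ᵥ v = μ ^ k • v := by
    intro k
    induction k with
    | zero => simp
    | succ k ih =>
      rw [pow_succ, Matrix.map_mul, ← Matrix.mulVec_mulVec, hBv, Matrix.mulVec_smul, ih, smul_smul,
        pow_succ']
  obtain ⟨i, hi⟩ := Function.ne_iff.mp hv.2
  set x : EuclideanSpace ℝ n := WithLp.toLp 2 (fun j => (v j).re) with hx
  set y : EuclideanSpace ℝ n := WithLp.toLp 2 (fun j => (v j).im) with hy
  have hre : ∀ k, (μ ^ k * v i).re = (Matrix.toEuclideanCLM (𝕜 := ℝ) (B ^ k) x) i := by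
    intro k
    have := congrFun (hk k) i
    simp only [Pi.smul_apply, smul_eq_mul] at this
    rw [← this]
    simp [-map_pow, Matrix.mulVec, dotProduct, hx]
  have him : ∀ k, (μ ^ k * v i).im = (Matrix.toEuclideanCLM (𝕜 := ℝ) (B ^ k) y) i := by
    intro k
    have := congrFun (hk k) i
    simp only [Pi.smul_apply, smul_eq_mul] at this
    rw [← this]
    simp [-map_pow, Matrix.mulVec, dotProduct, hy]
  have hb : ∀ k : ℕ, ‖v i‖ ≤ c * ρ ^ k * ‖x‖ + c * ρ ^ k * ‖y‖ := by
    intro k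
    have h1 : ‖v i‖ ≤ ‖μ ^ k * v i‖ := by
      rw [norm_mul, norm_pow]
      exact le_mul_of_one_le_left (norm_nonneg _) (one_le_pow₀ hμ1)
    refine h1.trans ((Complex.norm_le_abs_re_add_abs_im _).trans ?_)
    rw [hre, him]
    exact add_le_add ((PiLp.norm_apply_le _ i).trans (h x k)) ((PiLp.norm_apply_le _ i).trans (h y k))
  have ht : Filter.Tendsto (fun k : ℕ => c * ρ ^ k * ‖x‖ + c * ρ ^ k * ‖y‖) Filter.atTop (nhds 0) := by
    have := tendsto_pow_atTop_nhds_zero_of_lt_one hρ0.le hρ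
    have h2 := ((this.const_mul c).mul_const ‖x‖).add ((this.const_mul c).mul_const ‖y‖)
    simpa using h2
  have := ge_of_tendsto' ht hb
  exact hi (by simpa using this)

theorem aux_perturb {n : Type*} [Fintype n] [DecidableEq n] (P : Matrix n n ℝ)
    (A : ℝ → Matrix n n ℝ) (hAc : ContinuousAt A 0) (hPs : Pᵀ = P)
    (hP : ∀ z : n → ℝ, z ≠ 0 → 0 < z ⬝ᵥ (P *ᵥ z))
    (hPA : ∀ z : n → ℝ, z ≠ 0 → z ⬝ᵥ (P *ᵥ (A 0 *ᵥ z)) < 0) :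
    ∃ Tstar : ℝ, 0 < Tstar ∧ ∀ T : ℝ, 0 < T → T < Tstar →
      ∃ ε₀ : ℝ, 0 < ε₀ ∧ ∀ ε : ℝ, 0 < ε → ε ≤ ε₀ →
        (∀ μ ∈ spectrum ℂ (((1 : Matrix n n ℝ) + (ε * T) • A T).map (algebraMap ℝ ℂ)), ‖μ‖ < 1)
        ∧ ∃ c ρ : ℝ, 1 ≤ c ∧ 0 < ρ ∧ ρ < 1 ∧
            ∀ (z : EuclideanSpace ℝ n) (k : ℕ),
              ‖Matrix.toEuclideanCLM (𝕜 := ℝ) (((1 : Matrix n n ℝ) + (ε * T) • A T) ^ k) z‖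
                ≤ c * ρ ^ k * ‖z‖ := by
  have hin : ∀ (M : Matrix n n ℝ) (x y : EuclideanSpace ℝ n),
      inner ℝ x (Matrix.toEuclideanCLM (𝕜 := ℝ) M y) = x.ofLp ⬝ᵥ (M *ᵥ y.ofLp) := by
    intro M x y
    rw [EuclideanSpace.inner_eq_star_dotProduct, dotProduct_comm]
    simp
  have hne : ∀ x : EuclideanSpace ℝ n, x ≠ 0 → x.ofLp ≠ 0 := by
    intro x hx h; exact hx (by ext i; simp [h])
  obtain ⟨c, hc, hcP⟩ := aux_coercive (Matrix.toEuclideanCLM (𝕜 := ℝ) P) (by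
    intro x hx; rw [hin]; exact hP _ (hne x hx))
  obtain ⟨d, hd, hdA⟩ := aux_coercive (-Matrix.toEuclideanCLM (𝕜 := ℝ) (P * A 0)) (by
    intro x hx
    rw [_root_.neg_apply, inner_neg_right, hin, ← Matrix.mulVec_mulVec]
    have := hPA _ (hne x hx); linarith)
  have hcont : ContinuousAt (fun T => Matrix.toEuclideanCLM (𝕜 := ℝ) (P * A T)) 0 := by
    have h1 : Continuous (fun M : Matrix n n ℝ => Matrix.toEuclideanCLM (𝕜 := ℝ) M) :=
      LinearMap.continuous_of_finiteDimensional
        ((Matrix.toEuclideanCLM (𝕜 := ℝ) (n := n)).toAlgEquiv.toLinearMap)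
    have h2 : Continuous (fun M : Matrix n n ℝ => P * M) := by fun_prop
    exact (h1.comp h2).continuousAt.comp hAc
  rw [Metric.continuousAt_iff] at hcont
  obtain ⟨δ, hδ, hδA⟩ := hcont (d / 2) (by positivity)
  refine ⟨δ, hδ, fun T hT hTδ => ?_⟩
  have hclose := hδA (x := T) (by simpa [abs_of_pos hT] using hTδ)
  rw [dist_eq_norm] at hclose
  have hAT : ∀ x : EuclideanSpace ℝ n, inner ℝ x (Matrix.toEuclideanCLM (𝕜 := ℝ) P
      (Matrix.toEuclideanCLM (𝕜 := ℝ) (A T) x)) ≤ -(d / 2) * ‖x‖ ^ 2 := by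
    intro x
    have h1 := hdA x
    rw [_root_.neg_apply, inner_neg_right] at h1
    set D := Matrix.toEuclideanCLM (𝕜 := ℝ) (P * A T) - Matrix.toEuclideanCLM (𝕜 := ℝ) (P * A 0)
      with hD
    have h2 : inner ℝ x (D x) ≤ d / 2 * ‖x‖ ^ 2 := by
      have h3 := real_inner_le_norm x (D x)
      have h4 : ‖D x‖ ≤ d / 2 * ‖x‖ := D.le_of_opNorm_le hclose.le x
      have h5 : ‖x‖ * ‖D x‖ ≤ ‖x‖ * (d / 2 * ‖x‖) := by gcongr
      nlinarith
    have h6 : Matrix.toEuclideanCLM (𝕜 := ℝ) P (Matrix.toEuclideanCLM (𝕜 := ℝ) (A T) x)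
        = D x + Matrix.toEuclideanCLM (𝕜 := ℝ) (P * A 0) x := by
      rw [hD, _root_.sub_apply, sub_add_cancel, map_mul]; rfl
    rw [h6, inner_add_right]
    linarith
  obtain ⟨h₀, hh₀, hmain⟩ := aux_decay (Matrix.toEuclideanCLM (𝕜 := ℝ) P)
    (Matrix.toEuclideanCLM (𝕜 := ℝ) (A T)) (by
      intro x y
      rw [hin, hin, Matrix.dotProduct_mulVec, ← Matrix.mulVec_transpose, hPs, dotProduct_comm])
    c (d / 2) hc (by positivity) hcP hAT
  refine ⟨h₀ / T, by positivity, fun ε hε hle => ?_⟩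
  obtain ⟨C, ρ, hC, hρ0, hρ1, hdec⟩ := hmain (ε * T) (by positivity)
    (by rwa [le_div_iff₀ hT] at hle)
  have hfin : ∀ (z : EuclideanSpace ℝ n) (k : ℕ),
      ‖Matrix.toEuclideanCLM (𝕜 := ℝ) (((1 : Matrix n n ℝ) + (ε * T) • A T) ^ k) z‖
        ≤ C * ρ ^ k * ‖z‖ := by
    intro z k
    have := hdec z k
    rwa [← map_smul, ← map_one (Matrix.toEuclideanCLM (𝕜 := ℝ) (n := n)), ← map_add, ← map_pow]
      at this
  exact ⟨aux_spec _ C ρ hρ0 hρ1 hfin, C, ρ, hC, hρ0, hρ1, hfin⟩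

theorem aux_compare {n : Type*} [Fintype n] [DecidableEq n] (J L : Matrix n n ℝ)
    (hL : ∀ x : n → ℝ, x ≠ 0 → 0 < x ⬝ᵥ (L *ᵥ x)) :
    ∃ C : ℝ, 0 < C ∧ ∀ x : n → ℝ, x ⬝ᵥ (J *ᵥ x) ≤ C * (x ⬝ᵥ (L *ᵥ x)) := by
  have hin : ∀ (M : Matrix n n ℝ) (x y : EuclideanSpace ℝ n),
      inner ℝ x (Matrix.toEuclideanCLM (𝕜 := ℝ) M y) = x.ofLp ⬝ᵥ (M *ᵥ y.ofLp) := by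
    intro M x y
    rw [EuclideanSpace.inner_eq_star_dotProduct, dotProduct_comm]
    simp
  obtain ⟨c, hc, hcL⟩ := aux_coercive (Matrix.toEuclideanCLM (𝕜 := ℝ) L) (by
    intro x hx; rw [hin]; exact hL _ (fun h => hx (by ext i; simp [h])))
  set N := ‖Matrix.toEuclideanCLM (𝕜 := ℝ) J‖ + 1 with hN
  have hN0 : 0 < N := by positivity
  refine ⟨N / c, by positivity, fun x => ?_⟩
  have h1 := hcL (WithLp.toLp 2 x)
  rw [hin] at h1
  have h2 := real_inner_le_norm (WithLp.toLp 2 x) (Matrix.toEuclideanCLM (𝕜 := ℝ) J (WithLp.toLp 2 x))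
  rw [hin] at h2
  have h3 := (Matrix.toEuclideanCLM (𝕜 := ℝ) J).le_opNorm (WithLp.toLp 2 x)
  have h4 : ‖WithLp.toLp 2 x‖ * ‖Matrix.toEuclideanCLM (𝕜 := ℝ) J (WithLp.toLp 2 x)‖
      ≤ N * ‖WithLp.toLp 2 x‖ ^ 2 := by
    have : ‖WithLp.toLp 2 x‖ * ‖Matrix.toEuclideanCLM (𝕜 := ℝ) J (WithLp.toLp 2 x)‖ ≤
      ‖WithLp.toLp 2 x‖ * (‖Matrix.toEuclideanCLM (𝕜 := ℝ) J‖ * ‖WithLp.toLp 2 x‖) := by gcongr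
    nlinarith [sq_nonneg ‖WithLp.toLp 2 x‖]
  rw [div_mul_eq_mul_div, le_div_iff₀ hc]
  have h5 := mul_le_mul_of_nonneg_left h1 hN0.le
  have h6 := mul_le_mul_of_nonneg_right (h2.trans h4) hc.le
  simp only at h5 h6
  linarith

theorem aux_young {n : Type*} [Fintype n] [DecidableEq n] (M : Matrix n n ℝ) (hM : M.PosDef)
    (s t : ℝ) (x y : n → ℝ) :
    2 * (s * t) * (x ⬝ᵥ (M *ᵥ y)) ≤ s ^ 2 * (x ⬝ᵥ (M *ᵥ x)) + t ^ 2 * (y ⬝ᵥ (M *ᵥ y)) := by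
  have h := hM.posSemidef.dotProduct_mulVec_nonneg (s • x - t • y)
  have hs : y ⬝ᵥ (M *ᵥ x) = x ⬝ᵥ (M *ᵥ y) := by
    have ht : Mᵀ = M := by simpa [Matrix.IsSymm] using hM.isHermitian
    rw [Matrix.dotProduct_mulVec, ← Matrix.mulVec_transpose, ht, dotProduct_comm]
  simp only [star_trivial, Matrix.mulVec_sub, Matrix.mulVec_smul, dotProduct_sub, sub_dotProduct,
    dotProduct_smul, smul_dotProduct, smul_eq_mul, hs] at h
  nlinarith

theorem aux_lyap (J L : Matrix (Fin 3) (Fin 3) ℝ) (hJ : J.PosDef) (hL : L.PosDef)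
    (k₁ k₂ a : ℝ) (hk₁ : 0 < k₁) (hk₂ : 0 < k₂) (ha : 0 < a)
    (A : Matrix ((Fin 3 ⊕ Fin 3) ⊕ (Fin 3 ⊕ Fin 1)) ((Fin 3 ⊕ Fin 3) ⊕ (Fin 3 ⊕ Fin 1)) ℝ)
    (hA : A = Matrix.fromBlocks
      (Matrix.fromBlocks 0 ((1/2 : ℝ) • 1) (-(k₁ • (J⁻¹ * L))) 0)
      (Matrix.fromBlocks 0 0 (-((1/2 * k₂ * a) • (J⁻¹ * L))) 0)
      (Matrix.fromBlocks 0 ((1/2 : ℝ) • 1) 0 0)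
      (Matrix.fromBlocks (-(a • 1)) 0 0 (-(a • 1)))) :
    ∃ P : Matrix ((Fin 3 ⊕ Fin 3) ⊕ (Fin 3 ⊕ Fin 1)) ((Fin 3 ⊕ Fin 3) ⊕ (Fin 3 ⊕ Fin 1)) ℝ,
      Pᵀ = P ∧ (∀ z, z ≠ 0 → 0 < z ⬝ᵥ (P *ᵥ z)) ∧ (∀ z, z ≠ 0 → z ⬝ᵥ (P *ᵥ (A *ᵥ z)) < 0) := by
  have hJt : Jᵀ = J := by simpa [Matrix.IsSymm] using hJ.isHermitian
  have hLt : Lᵀ = L := by simpa [Matrix.IsSymm] using hL.isHermitian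
  have hJp : ∀ x : Fin 3 → ℝ, x ≠ 0 → 0 < x ⬝ᵥ (J *ᵥ x) := by
    intro x hx; simpa using hJ.dotProduct_mulVec_pos hx
  have hLp : ∀ x : Fin 3 → ℝ, x ≠ 0 → 0 < x ⬝ᵥ (L *ᵥ x) := by
    intro x hx; simpa using hL.dotProduct_mulVec_pos hx
  have hJn : ∀ x : Fin 3 → ℝ, 0 ≤ x ⬝ᵥ (J *ᵥ x) := by
    intro x; simpa using hJ.posSemidef.dotProduct_mulVec_nonneg x
  have hLn : ∀ x : Fin 3 → ℝ, 0 ≤ x ⬝ᵥ (L *ᵥ x) := by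
    intro x; simpa using hL.posSemidef.dotProduct_mulVec_nonneg x
  have hJsym : ∀ x y : Fin 3 → ℝ, y ⬝ᵥ (J *ᵥ x) = x ⬝ᵥ (J *ᵥ y) := by
    intro x y; rw [Matrix.dotProduct_mulVec, ← Matrix.mulVec_transpose, hJt, dotProduct_comm]
  have hLsym : ∀ x y : Fin 3 → ℝ, y ⬝ᵥ (L *ᵥ x) = x ⬝ᵥ (L *ᵥ y) := by
    intro x y; rw [Matrix.dotProduct_mulVec, ← Matrix.mulVec_transpose, hLt, dotProduct_comm]
  have hJJ : J * (J⁻¹ * L) = L := by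
    rw [← mul_assoc, Matrix.mul_nonsing_inv _ ((Matrix.isUnit_iff_isUnit_det J).mp hJ.isUnit), one_mul]
  obtain ⟨C, hC, hCJ⟩ := aux_compare J L hLp
  set b := 2 * k₁ - 1/2 * k₂ * a with hb
  set D := b ^ 2 / (2 * k₁) with hD
  have hD0 : 0 ≤ D := by positivity
  set N := 4 * a ^ 2 * C + k₂ * a + D with hN
  have hN0 : 0 < N := by positivity
  obtain ⟨γ, hγ0, hγ⟩ : ∃ γ : ℝ, 0 < γ ∧
      γ < min (min (1/4) (k₁ / C)) (min (k₂ * a / 2 / C) (k₂ * a ^ 2 / N)) :=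
    exists_between (by positivity)
  simp only [lt_min_iff, lt_div_iff₀ hC, lt_div_iff₀ hN0] at hγ
  obtain ⟨⟨hγ1, hγ2⟩, hγ3, hγ4⟩ := hγ
  -- reduce nonvanishing of a vector to its blocks
  have hz : ∀ z : (Fin 3 ⊕ Fin 3) ⊕ (Fin 3 ⊕ Fin 1) → ℝ, ∃ (q w δ : Fin 3 → ℝ) (η : Fin 1 → ℝ),
      z = Sum.elim (Sum.elim q w) (Sum.elim δ η) := by
    intro z
    refine ⟨fun i => z (.inl (.inl i)), fun i => z (.inl (.inr i)), fun i => z (.inr (.inl i)),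
      fun i => z (.inr (.inr i)), ?_⟩
    ext i; rcases i with (i | i) | (i | i) <;> rfl
  have hpos : ∀ (q w δ : Fin 3 → ℝ) (η : Fin 1 → ℝ) (m₁ m₂ m₃ m₄ : ℝ), 0 < m₁ → 0 < m₂ → 0 < m₃ →
      0 < m₄ → Sum.elim (Sum.elim q w) (Sum.elim δ η) ≠ 0 →
      0 < m₁ * (q ⬝ᵥ (L *ᵥ q)) + m₂ * (w ⬝ᵥ (J *ᵥ w)) + m₃ * (δ ⬝ᵥ (L *ᵥ δ)) + m₄ * (η 0) ^ 2 := by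
    intro q w δ η m₁ m₂ m₃ m₄ h₁ h₂ h₃ h₄ hne
    have e1 := mul_nonneg h₁.le (hLn q)
    have e2 := mul_nonneg h₂.le (hJn w)
    have e3 := mul_nonneg h₃.le (hLn δ)
    have e4 := mul_nonneg h₄.le (sq_nonneg (η 0))
    by_contra! hle
    apply hne
    have hq : q = 0 := by
      by_contra hx
      have := mul_pos h₁ (hLp q hx); linarith
    have hw : w = 0 := by
      by_contra hx
      have := mul_pos h₂ (hJp w hx); linarith
    have hδ : δ = 0 := by
      by_contra hx
      have := mul_pos h₃ (hLp δ hx); linarith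
    have hη : η = 0 := by
      by_contra hx
      have hx0 : η 0 ≠ 0 := by
        intro h0; apply hx; ext i; rw [Subsingleton.elim i 0, h0]; rfl
      have := mul_pos h₄ (pow_pos (abs_pos.mpr hx0) 2)
      rw [sq_abs] at this
      linarith
    subst hq hw hδ hη
    ext i; rcases i with (i | i) | (i | i) <;> rfl
  refine ⟨Matrix.fromBlocks
      (Matrix.fromBlocks (k₁ • L) ((γ / 2) • J) ((γ / 2) • J) ((1/2 : ℝ) • J))
      (Matrix.fromBlocks 0 0 (-(γ • J)) 0)
      (Matrix.fromBlocks 0 (-(γ • J)) 0 0)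
      (Matrix.fromBlocks ((k₂ * a / 2) • L) 0 0 1), ?_, ?_, ?_⟩
  · simp [Matrix.fromBlocks_transpose, hJt, hLt]
  · intro z hne
    obtain ⟨q, w, δ, η, rfl⟩ := hz z
    have key : Sum.elim (Sum.elim q w) (Sum.elim δ η) ⬝ᵥ (Matrix.fromBlocks
      (Matrix.fromBlocks (k₁ • L) ((γ / 2) • J) ((γ / 2) • J) ((1/2 : ℝ) • J))
      (Matrix.fromBlocks 0 0 (-(γ • J)) 0)
      (Matrix.fromBlocks 0 (-(γ • J)) 0 0)
      (Matrix.fromBlocks ((k₂ * a / 2) • L) 0 0 1) *ᵥ Sum.elim (Sum.elim q w) (Sum.elim δ η))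
      = k₁ * (q ⬝ᵥ (L *ᵥ q)) + γ * (q ⬝ᵥ (J *ᵥ w)) + 1/2 * (w ⬝ᵥ (J *ᵥ w))
        - 2 * γ * (δ ⬝ᵥ (J *ᵥ w)) + k₂ * a / 2 * (δ ⬝ᵥ (L *ᵥ δ)) + (η 0) ^ 2 := by
      simp [Matrix.fromBlocks_mulVec, Matrix.smul_mulVec, Matrix.neg_mulVec, sumElim_dotProduct_sumElim,
        dotProduct_add, dotProduct_smul, hJsym q w, hJsym δ w]
      simp [dotProduct]
      ring
    rw [key]
    have y1 := aux_young J hJ 1 (-1) q w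
    have y2 := aux_young J hJ 1 1 δ w
    have c1 := hCJ q
    have c2 := hCJ δ
    have := hpos q w δ η (k₁ - γ * C) (1/2 - 3/2 * γ) (k₂ * a / 2 - γ * C) 1 (by linarith)
      (by linarith) (by linarith) one_pos hne
    have y1' := mul_le_mul_of_nonneg_left y1 hγ0.le
    have y2' := mul_le_mul_of_nonneg_left y2 hγ0.le
    have c1' := mul_le_mul_of_nonneg_left c1 hγ0.le
    have c2' := mul_le_mul_of_nonneg_left c2 hγ0.le
    have n1 := mul_nonneg (mul_nonneg hγ0.le hC.le) (hLn q)
    linarith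
  · intro z hne
    obtain ⟨q, w, δ, η, rfl⟩ := hz z
    have key : Sum.elim (Sum.elim q w) (Sum.elim δ η) ⬝ᵥ (Matrix.fromBlocks
      (Matrix.fromBlocks (k₁ • L) ((γ / 2) • J) ((γ / 2) • J) ((1/2 : ℝ) • J))
      (Matrix.fromBlocks 0 0 (-(γ • J)) 0)
      (Matrix.fromBlocks 0 (-(γ • J)) 0 0)
      (Matrix.fromBlocks ((k₂ * a / 2) • L) 0 0 1) *ᵥ
        (A *ᵥ Sum.elim (Sum.elim q w) (Sum.elim δ η)))
      = 1/2 * (-(k₂ * a ^ 2) * (δ ⬝ᵥ (L *ᵥ δ)) + γ * (-(1/2) * (w ⬝ᵥ (J *ᵥ w))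
          - k₁ * (q ⬝ᵥ (L *ᵥ q)) + 2 * a * (δ ⬝ᵥ (J *ᵥ w)) + b * (q ⬝ᵥ (L *ᵥ δ))
          + k₂ * a * (δ ⬝ᵥ (L *ᵥ δ)))) - a * (η 0) ^ 2 := by
      simp [hA, Matrix.fromBlocks_mulVec, Matrix.smul_mulVec, Matrix.neg_mulVec,
        sumElim_dotProduct_sumElim, Matrix.mulVec_add, Matrix.mulVec_neg, Matrix.mulVec_smul,
        Matrix.mulVec_mulVec, hJJ,
        dotProduct_add, dotProduct_smul, hJsym q w, hJsym δ w, hLsym q w, hLsym δ w, hLsym q δ]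
      simp [dotProduct]
      ring
    rw [key]
    have y1 := aux_young J hJ (4 * a) 1 δ w
    have y2 := aux_young L hL k₁ b q δ
    have c2 := hCJ δ
    have := hpos q w δ η (γ * k₁ / 4) (γ / 8) ((k₂ * a ^ 2 - γ * N) / 2) a (by positivity)
      (by positivity) (by linarith) ha hne
    have y1' := mul_le_mul_of_nonneg_left y1 hγ0.le
    have y2a : b * (q ⬝ᵥ (L *ᵥ δ)) ≤ k₁ / 2 * (q ⬝ᵥ (L *ᵥ q)) + D * (δ ⬝ᵥ (L *ᵥ δ)) := by
      rw [hD]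
      have e : k₁ / 2 * (q ⬝ᵥ (L *ᵥ q)) + b ^ 2 / (2 * k₁) * (δ ⬝ᵥ (L *ᵥ δ))
        = (k₁ ^ 2 * (q ⬝ᵥ (L *ᵥ q)) + b ^ 2 * (δ ⬝ᵥ (L *ᵥ δ))) / (2 * k₁) := by field_simp
      rw [e, le_div_iff₀ (by positivity)]
      linarith
    have y2' := mul_le_mul_of_nonneg_left y2a hγ0.le
    have c2' := mul_le_mul_of_nonneg_left c2 (by positivity : 0 ≤ γ * (4 * a ^ 2))
    rw [hN] at this
    linarith

/-- Theorem 2 of the paper, averaged output-feedback system. With `J, L₀`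
symmetric positive definite, `k₁, k₂, α, λ > 0`, and `L : ℝ → M₃(ℝ)` continuous at `0`
with `L 0 = L₀`, set
`A_o(T) = [[0, (1/2)I₃, 0, 0], [−k₁J⁻¹L(T), 0, −(1/2)k₂αλJ⁻¹L(T), 0],
[0, (1/2)I₃, −αλI₃, 0], [0, 0, 0, −αλ]]`. Then there is `T* > 0` such that for every
`0 < T < T*` there is `ε₀ > 0` such that for all `0 < ε ≤ ε₀` every complex eigenvalue of
`I₁₀ + εT A_o(T)` has modulus `< 1`, and the discrete-time system
`z(k+1) = (I₁₀ + εT A_o(T)) z(k)` is exponentially stable. -/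
theorem averaged_output_feedback_stability
    (J L₀ : Matrix (Fin 3) (Fin 3) ℝ) (hJ : J.PosDef) (hL₀ : L₀.PosDef)
    (k₁ k₂ α lam : ℝ) (hk₁ : 0 < k₁) (hk₂ : 0 < k₂) (hα : 0 < α) (hlam : 0 < lam)
    (L : ℝ → Matrix (Fin 3) (Fin 3) ℝ) (hLcont : ContinuousAt L 0) (hL0 : L 0 = L₀)
    (Ao : ℝ → Matrix ((Fin 3 ⊕ Fin 3) ⊕ (Fin 3 ⊕ Fin 1)) ((Fin 3 ⊕ Fin 3) ⊕ (Fin 3 ⊕ Fin 1)) ℝ)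
    (hAo : ∀ T, Ao T = Matrix.fromBlocks
      (Matrix.fromBlocks
        (0 : Matrix (Fin 3) (Fin 3) ℝ) ((1/2 : ℝ) • (1 : Matrix (Fin 3) (Fin 3) ℝ))
        (-(k₁ • (J⁻¹ * L T))) (0 : Matrix (Fin 3) (Fin 3) ℝ))
      (Matrix.fromBlocks
        (0 : Matrix (Fin 3) (Fin 3) ℝ) (0 : Matrix (Fin 3) (Fin 1) ℝ)
        (-(((1/2) * k₂ * α * lam) • (J⁻¹ * L T))) (0 : Matrix (Fin 3) (Fin 1) ℝ))
      (Matrix.fromBlocks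
        (0 : Matrix (Fin 3) (Fin 3) ℝ) ((1/2 : ℝ) • (1 : Matrix (Fin 3) (Fin 3) ℝ))
        (0 : Matrix (Fin 1) (Fin 3) ℝ) (0 : Matrix (Fin 1) (Fin 3) ℝ))
      (Matrix.fromBlocks
        (-((α * lam) • (1 : Matrix (Fin 3) (Fin 3) ℝ))) (0 : Matrix (Fin 3) (Fin 1) ℝ)
        (0 : Matrix (Fin 1) (Fin 3) ℝ) (-((α * lam) • (1 : Matrix (Fin 1) (Fin 1) ℝ))))) :
    ∃ Tstar : ℝ, 0 < Tstar ∧ ∀ T : ℝ, 0 < T → T < Tstar →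
      ∃ ε₀ : ℝ, 0 < ε₀ ∧ ∀ ε : ℝ, 0 < ε → ε ≤ ε₀ →
        (∀ μ ∈ spectrum ℂ
            (((1 : Matrix ((Fin 3 ⊕ Fin 3) ⊕ (Fin 3 ⊕ Fin 1)) ((Fin 3 ⊕ Fin 3) ⊕ (Fin 3 ⊕ Fin 1)) ℝ)
              + (ε * T) • Ao T).map (algebraMap ℝ ℂ)),
          ‖μ‖ < 1)
        ∧ ∃ c ρ : ℝ, 1 ≤ c ∧ 0 < ρ ∧ ρ < 1 ∧
            ∀ (z : EuclideanSpace ℝ ((Fin 3 ⊕ Fin 3) ⊕ (Fin 3 ⊕ Fin 1))) (k : ℕ),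
              ‖Matrix.toEuclideanCLM (𝕜 := ℝ)
                  (((1 : Matrix ((Fin 3 ⊕ Fin 3) ⊕ (Fin 3 ⊕ Fin 1)) ((Fin 3 ⊕ Fin 3) ⊕ (Fin 3 ⊕ Fin 1)) ℝ)
                    + (ε * T) • Ao T) ^ k) z‖
                ≤ c * ρ ^ k * ‖z‖ := by
  subst hL0
  obtain ⟨P, hPs, hP, hPA⟩ := aux_lyap J (L 0) hJ hL₀ k₁ k₂ (α * lam) hk₁ hk₂ (by positivity) (Ao 0)
    (by rw [hAo 0]; simp only [mul_assoc])
  refine aux_perturb P Ao ?_ hPs hP hPA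
  have h : Ao = _ := funext hAo
  rw [h]
  have hc : Continuous (fun M : Matrix (Fin 3) (Fin 3) ℝ => Matrix.fromBlocks
      (Matrix.fromBlocks
        (0 : Matrix (Fin 3) (Fin 3) ℝ) ((1/2 : ℝ) • (1 : Matrix (Fin 3) (Fin 3) ℝ))
        (-(k₁ • (J⁻¹ * M))) (0 : Matrix (Fin 3) (Fin 3) ℝ))
      (Matrix.fromBlocks
        (0 : Matrix (Fin 3) (Fin 3) ℝ) (0 : Matrix (Fin 3) (Fin 1) ℝ)
        (-(((1/2) * k₂ * α * lam) • (J⁻¹ * M))) (0 : Matrix (Fin 3) (Fin 1) ℝ))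
      (Matrix.fromBlocks
        (0 : Matrix (Fin 3) (Fin 3) ℝ) ((1/2 : ℝ) • (1 : Matrix (Fin 3) (Fin 3) ℝ))
        (0 : Matrix (Fin 1) (Fin 3) ℝ) (0 : Matrix (Fin 1) (Fin 3) ℝ))
      (Matrix.fromBlocks
        (-((α * lam) • (1 : Matrix (Fin 3) (Fin 3) ℝ))) (0 : Matrix (Fin 3) (Fin 1) ℝ)
        (0 : Matrix (Fin 1) (Fin 3) ℝ) (-((α * lam) • (1 : Matrix (Fin 1) (Fin 1) ℝ))))) := by
    refine Continuous.matrix_fromBlocks ?_ ?_ continuous_const continuous_const <;>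
    refine Continuous.matrix_fromBlocks ?_ ?_ ?_ ?_ <;> fun_prop
  exact hc.continuousAt.comp hLcont
end
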